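/- Fenchel variational inequality for KL with conjugate Ψ*(t) = e^t − 1: let μ and ρ be finite measures on a measurable space with ρ absolutely continuous with respect to μ, and let g be a measurable real-valued function that is integrable with respect to ρ and such that e^g is integrable with respect to μ. Then ∫ g dρ − ∫ (e^{g} − 1) dμ ≤ KL(ρ‖μ). -/

import Mathlib

/-!
The Fenchel–Young inequality `r * t ≤ klFun r + (exp t - 1)`, for `r ≥ 0`, is the nonnegativity of
`klFun` at `r * exp (-t)` rescaled by `exp t`. Taking `r = dρ/dμ` and `t = g` and integrating
against `μ` turns `∫ (dρ/dμ) * g ∂μ` into `∫ g ∂ρ`. The integral over `μ` is at most the lower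
integral of its positive part, a comparison that still makes sense when the divergence is infinite.
-/

open MeasureTheory
open scoped ENNReal
open Classical

/-- The Kullback–Leibler divergence `KL(ρ‖μ) = ∫ (r log r + 1 - r) dμ` where `r = dρ/dμ`,
valued in `EReal`, with `KL(ρ‖μ) = +∞` when `ρ` is not absolutely continuous w.r.t. `μ`.
(The integrand `r log r + 1 - r` is nonnegative, so the lower integral captures the value.) -/
noncomputable def klDiv {α : Type*} [MeasurableSpace α] (ρ μ : Measure α) : EReal :=
  if ρ ≪ μ then
    (((∫⁻ x, ENNReal.ofReal ((ρ.rnDeriv μ x).toReal * Real.log (ρ.rnDeriv μ x).toReal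
        + 1 - (ρ.rnDeriv μ x).toReal) ∂μ) : ℝ≥0∞) : EReal)
  else ⊤

section

open Real InformationTheory

theorem exp_mul_klFun_mul_exp_neg (r t : ℝ) :
    exp t * klFun (r * exp (-t)) = klFun r + (exp t - 1) - r * t := by
  rcases eq_or_ne r 0 with rfl | hr
  · simp [klFun]
  · have hlog : log (r * exp (-t)) = log r - t := by
      rw [log_mul hr (exp_pos _).ne', log_exp, ← sub_eq_add_neg]
    have hexp : exp t * exp (-t) = 1 := by rw [← exp_add, add_neg_cancel, exp_zero]
    rw [klFun_apply, klFun_apply, hlog]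
    linear_combination r * (log r - t - 1) * hexp

theorem mul_le_klFun_add_exp_sub_one {r : ℝ} (hr : 0 ≤ r) (t : ℝ) :
    r * t ≤ klFun r + (exp t - 1) := by
  rw [← sub_nonneg, ← exp_mul_klFun_mul_exp_neg]
  exact mul_nonneg (exp_pos t).le (klFun_nonneg (by positivity))

end

section

variable {α : Type*} [MeasurableSpace α] {μ ρ : Measure α}

theorem coe_integral_le_lintegral_ofReal (f : α → ℝ) :
    ((∫ x, f x ∂μ : ℝ) : EReal) ≤ ∫⁻ x, ENNReal.ofReal (f x) ∂μ := by
  by_cases hf : Integrable f μ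
  · rw [integral_eq_lintegral_pos_part_sub_lintegral_neg_part hf,
      ← EReal.coe_ennreal_toReal hf.lintegral_lt_top.ne, EReal.coe_le_coe_iff]
    exact sub_le_self _ ENNReal.toReal_nonneg
  · rw [integral_undef hf]
    exact EReal.coe_ennreal_nonneg _

theorem integral_sub_integral_le_lintegral_rnDeriv_of_fenchelYoung
    [ρ.HaveLebesgueDecomposition μ] [SigmaFinite ρ] {φ ψ : ℝ → ℝ}
    (hφψ : ∀ r, 0 ≤ r → ∀ t, r * t ≤ φ r + ψ t) (hρμ : ρ ≪ μ) {g : α → ℝ}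
    (hgρ : Integrable g ρ) (hψg : Integrable (fun x => ψ (g x)) μ) :
    (((∫ x, g x ∂ρ) - ∫ x, ψ (g x) ∂μ : ℝ) : EReal) ≤
      ∫⁻ x, ENNReal.ofReal (φ (ρ.rnDeriv μ x).toReal) ∂μ := by
  have hrg : Integrable (fun x => (ρ.rnDeriv μ x).toReal * g x) μ :=
    (integrable_toReal_rnDeriv_mul_iff hρμ).2 hgρ
  have hmono : ∫⁻ x, ENNReal.ofReal ((ρ.rnDeriv μ x).toReal * g x - ψ (g x)) ∂μ ≤
      ∫⁻ x, ENNReal.ofReal (φ (ρ.rnDeriv μ x).toReal) ∂μ :=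
    lintegral_mono fun x => ENNReal.ofReal_le_ofReal <|
      sub_le_iff_le_add.2 (hφψ _ ENNReal.toReal_nonneg _)
  calc (((∫ x, g x ∂ρ) - ∫ x, ψ (g x) ∂μ : ℝ) : EReal)
      = ((∫ x, ((ρ.rnDeriv μ x).toReal * g x - ψ (g x)) ∂μ : ℝ) : EReal) := by
        rw [integral_sub hrg hψg, integral_toReal_rnDeriv_mul hρμ]
    _ ≤ ∫⁻ x, ENNReal.ofReal ((ρ.rnDeriv μ x).toReal * g x - ψ (g x)) ∂μ :=
        coe_integral_le_lintegral_ofReal _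
    _ ≤ ∫⁻ x, ENNReal.ofReal (φ (ρ.rnDeriv μ x).toReal) ∂μ :=
        EReal.coe_ennreal_le_coe_ennreal_iff.2 hmono

theorem kl_fenchel_variational_inequality_general
    [ρ.HaveLebesgueDecomposition μ] [SigmaFinite ρ] {g : α → ℝ}
    (hgρ : Integrable g ρ) (hgμ : Integrable (fun x => Real.exp (g x) - 1) μ) :
    (((∫ x, g x ∂ρ) - ∫ x, (Real.exp (g x) - 1) ∂μ : ℝ) : EReal) ≤ klDiv ρ μ := by
  rw [klDiv]
  split_ifs with hρμ
  · exact integral_sub_integral_le_lintegral_rnDeriv_of_fenchelYoung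
      (φ := InformationTheory.klFun) (ψ := fun t => Real.exp t - 1)
      (fun _ hr => mul_le_klFun_add_exp_sub_one hr) hρμ hgρ hgμ
  · exact le_top

end

/-- Fenchel variational inequality for KL with conjugate `Ψ*(t) = e^t - 1`: if `ρ ≪ μ` are
finite measures, `g` is measurable, integrable w.r.t. `ρ`, and `e^g` is integrable w.r.t. `μ`,
then `∫ g dρ - ∫ (e^g - 1) dμ ≤ KL(ρ‖μ)`. -/
theorem kl_fenchel_variational_inequality {α : Type*} [MeasurableSpace α]
    (μ ρ : Measure α) [IsFiniteMeasure μ] [IsFiniteMeasure ρ] (hρμ : ρ ≪ μ)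
    (g : α → ℝ) (hg : Measurable g) (hgρ : Integrable g ρ)
    (hgμ : Integrable (fun x => Real.exp (g x)) μ) :
    (((∫ x, g x ∂ρ) - ∫ x, (Real.exp (g x) - 1) ∂μ : ℝ) : EReal) ≤ klDiv ρ μ :=
  kl_fenchel_variational_inequality_general hgρ (hgμ.sub (integrable_const 1))
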